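/- arXiv:2503.01857 — 15 statements merged into one kernel-verified Lean document; each statement's English description precedes it below -/
import Mathlib

section
/- Let n ≥ 1, let 0 < α ≤ 1, γ > 0, t_c > 0, and let ε : ℝ → ℝⁿ be continuous on [0, t_c) and follow the noise-free FOZNN convergence-phase dynamics on (0, t_c). Then ε(t) tends to 0 as t tends to t_c from the left. -/
/-- For `ε` continuous on `[0, t_c)` following the noise-free FOZNN
convergence-phase dynamics on `(0, t_c)`, `ε(t) → 0` as `t → t_c⁻`. -/
theorem foznn_noise_free_convergence
    (n : ℕ) (hn : 1 ≤ n) (α γ tc : ℝ)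
    (hα0 : 0 < α) (hα1 : α ≤ 1) (hγ : 0 < γ) (htc : 0 < tc)
    (ε : ℝ → EuclideanSpace ℝ (Fin n))
    (hcont : ContinuousOn ε (Set.Ico 0 tc))
    (hdyn : ∀ t ∈ Set.Ioo (0 : ℝ) tc, ε t ≠ 0 ∧
      HasDerivAt ε
        ((-(t ^ (α - 1) / tc ^ (α - 1)) *
          (1 / (tc - t) + γ * ‖ε t‖ / (tc - t) ^ 2)) • ε t) t) :
    Filter.Tendsto ε (nhdsWithin tc (Set.Iio tc)) (nhds 0) := by
  have hd : ∀ t ∈ Set.Ioo (0 : ℝ) tc, ∃ d ≤ 0,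
      HasDerivAt (fun t => ‖ε t‖ ^ 2 / (tc - t) ^ 2) d t := by
    intro t ht
    obtain ⟨-, h⟩ := hdyn t ht
    have hs : 0 < tc - t := sub_pos.2 ht.2
    have hk : 1 ≤ t ^ (α - 1) / tc ^ (α - 1) := by
      rw [one_le_div (Real.rpow_pos_of_pos htc _)]
      exact Real.rpow_le_rpow_of_nonpos ht.1 ht.2.le (by linarith)
    set k := t ^ (α - 1) / tc ^ (α - 1) with hkdef
    have hB : 1 / (tc - t) ≤ 1 / (tc - t) + γ * ‖ε t‖ / (tc - t) ^ 2 := by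
      have : 0 ≤ γ * ‖ε t‖ / (tc - t) ^ 2 := by positivity
      linarith
    set B := 1 / (tc - t) + γ * ‖ε t‖ / (tc - t) ^ 2 with hBdef
    have hkB : 1 / (tc - t) ≤ k * B := by
      have h0 : 0 < 1 / (tc - t) := by positivity
      nlinarith
    have hkB' : 1 ≤ k * B * (tc - t) := by
      rwa [div_le_iff₀ hs] at hkB
    have h1 := h.norm_sq
    have h2 : HasDerivAt (fun t : ℝ => (tc - t) ^ 2) (2 * (tc - t) * (-1)) t := by
      have h3 := ((hasDerivAt_id t).const_sub tc).fun_pow 2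
      simpa using h3
    refine ⟨_, ?_, h1.div h2 (by positivity)⟩
    apply div_nonpos_of_nonpos_of_nonneg _ (by positivity)
    rw [inner_smul_right, real_inner_self_eq_norm_sq]
    have h3 : 0 ≤ ‖ε t‖ ^ 2 * (tc - t) * (k * B * (tc - t) - 1) :=
      mul_nonneg (by positivity) (by linarith)
    nlinarith
  have hanti : AntitoneOn (fun t => ‖ε t‖ ^ 2 / (tc - t) ^ 2) (Set.Ioo 0 tc) := by
    apply antitoneOn_of_deriv_nonpos (convex_Ioo 0 tc)
    · intro t ht
      obtain ⟨d, -, h⟩ := hd t ht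
      exact h.continuousAt.continuousWithinAt
    · rw [interior_Ioo]
      intro t ht
      obtain ⟨d, -, h⟩ := hd t ht
      exact h.differentiableAt.differentiableWithinAt
    · rw [interior_Ioo]
      intro t ht
      obtain ⟨d, hd0, h⟩ := hd t ht
      rw [h.deriv]
      exact hd0
  obtain ⟨C, hC⟩ : ∃ C, C = ‖ε (tc / 2)‖ ^ 2 / (tc - tc / 2) ^ 2 := ⟨_, rfl⟩
  have hlim : Filter.Tendsto (fun t => Real.sqrt (C * (tc - t) ^ 2))
      (nhdsWithin tc (Set.Iio tc)) (nhds 0) := by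
    have hc : Continuous (fun t => Real.sqrt (C * (tc - t) ^ 2)) := by fun_prop
    have := hc.tendsto tc
    simp only [sub_self, ne_eq, OfNat.ofNat_ne_zero, not_false_eq_true, zero_pow, mul_zero,
      Real.sqrt_zero] at this
    exact this.mono_left nhdsWithin_le_nhds
  refine squeeze_zero_norm' ?_ hlim
  have hmem : Set.Ioo (tc / 2) tc ∈ nhdsWithin tc (Set.Iio tc) :=
    Ioo_mem_nhdsLT (by linarith)
  filter_upwards [hmem] with t ht
  have hs : 0 < tc - t := sub_pos.2 ht.2
  have h := hanti (show tc / 2 ∈ Set.Ioo 0 tc from ⟨by linarith, by linarith⟩)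
    (show t ∈ Set.Ioo 0 tc from ⟨by linarith [ht.1], ht.2⟩) ht.1.le
  simp only [← hC] at h
  rw [div_le_iff₀ (by positivity)] at h
  exact Real.le_sqrt_of_sq_le h
end

section
/- Let n ≥ 1, let 0 < α ≤ 1, γ > 0, t_c > 0, and let ε : ℝ → ℝⁿ follow the noise-free FOZNN convergence-phase dynamics on (0, t_c). Define V(t) = ‖ε(t)‖/(t_c − t). Then for every t ∈ (0, t_c), V is differentiable at t and its derivative satisfies V'(t) ≤ −γ V(t)²/(t_c − t) ≤ 0. -/
/-- For `ε` following the noise-free FOZNN convergence-phase dynamics on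
`(0, t_c)` and `V(t) = ‖ε(t)‖/(t_c − t)`, for every `t ∈ (0, t_c)` the function `V` is
differentiable at `t` with `V'(t) ≤ −γ V(t)²/(t_c − t) ≤ 0`. -/
theorem foznn_noise_free_lyapunov_derivative
    (n : ℕ) (hn : 1 ≤ n) (α γ tc : ℝ)
    (hα0 : 0 < α) (hα1 : α ≤ 1) (hγ : 0 < γ) (htc : 0 < tc)
    (ε : ℝ → EuclideanSpace ℝ (Fin n))
    (hdyn : ∀ t ∈ Set.Ioo (0 : ℝ) tc, ε t ≠ 0 ∧
      HasDerivAt ε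
        ((-(t ^ (α - 1) / tc ^ (α - 1)) *
          (1 / (tc - t) + γ * ‖ε t‖ / (tc - t) ^ 2)) • ε t) t)
    (V : ℝ → ℝ) (hV : ∀ t, V t = ‖ε t‖ / (tc - t)) :
    ∀ t ∈ Set.Ioo (0 : ℝ) tc,
      DifferentiableAt ℝ V t ∧
      deriv V t ≤ -(γ * (V t) ^ 2 / (tc - t)) ∧
      -(γ * (V t) ^ 2 / (tc - t)) ≤ 0 := by
  intro t ht
  obtain ⟨hne, hd⟩ := hdyn t ht
  obtain ⟨ht0, ht1⟩ := ht
  have hdpos : 0 < tc - t := by linarith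
  have hN : 0 < ‖ε t‖ := norm_pos_iff.mpr hne
  have hk : 1 ≤ t ^ (α - 1) / tc ^ (α - 1) := by
    rw [le_div_iff₀ (Real.rpow_pos_of_pos htc _), one_mul]
    exact Real.rpow_le_rpow_of_nonpos ht0 ht1.le (by linarith)
  set k := t ^ (α - 1) / tc ^ (α - 1) with hkdef
  have hnorm : HasDerivAt (fun s => ‖ε s‖)
      (-k * (1 / (tc - t) + γ * ‖ε t‖ / (tc - t) ^ 2) * ‖ε t‖) t := by
    have h1 := hd.norm_sq.sqrt (by positivity)
    have h2 : (fun s => √(‖ε s‖ ^ 2)) = fun s => ‖ε s‖ := by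
      funext s
      exact Real.sqrt_sq (norm_nonneg _)
    rw [h2] at h1
    convert h1 using 1
    rw [Real.sqrt_sq hN.le, real_inner_smul_right, real_inner_self_eq_norm_sq]
    field_simp
  have hden : HasDerivAt (fun s : ℝ => tc - s) (-1) t := by
    simpa using (hasDerivAt_id t).const_sub tc
  have hVd := hnorm.fun_div hden hdpos.ne'
  have hVe : V = fun s => ‖ε s‖ / (tc - s) := funext hV
  rw [← hVe] at hVd
  refine ⟨hVd.differentiableAt, ?_, ?_⟩
  · rw [hVd.deriv, hV t]
    have hA : 0 ≤ (1 / (tc - t) + γ * ‖ε t‖ / (tc - t) ^ 2) * ‖ε t‖ * (tc - t) := by positivity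
    have e : -(γ * (‖ε t‖ / (tc - t)) ^ 2 / (tc - t)) =
        (-((1 / (tc - t) + γ * ‖ε t‖ / (tc - t) ^ 2) * ‖ε t‖ * (tc - t)) + ‖ε t‖)
          / (tc - t) ^ 2 := by
      field_simp
      ring
    rw [e]
    apply div_le_div_of_nonneg_right _ (by positivity)
    nlinarith [mul_nonneg (sub_nonneg.mpr hk) hA]
  · have : 0 ≤ γ * (V t) ^ 2 / (tc - t) := by positivity
    linarith
end

section
/- Let t_c > 0 and γ > 0. Let V : ℝ → ℝ be continuous on [0, t_c), differentiable at every t ∈ (0, t_c), with V(t) > 0 for all t ∈ [0, t_c) and V'(t) ≤ −γ V(t)²/(t_c − t) for all t ∈ (0, t_c). Then for every t ∈ (0, t_c), ln(t_c/(t_c − t)) ≤ (1/γ)·(1/V(t) − 1/V(0)); consequently V(t) tends to 0 as t tends to t_c from the left. -/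
/-- Scalar differential inequality `V' ≤ −γ V²/(t_c − t)` for a positive
continuous `V` on `[0, t_c)` yields `ln(t_c/(t_c − t)) ≤ (1/γ)(1/V(t) − 1/V(0))`
for `t ∈ (0, t_c)`, and consequently `V(t) → 0` as `t → t_c⁻`. -/
theorem scalar_comparison_noise_free
    (tc γ : ℝ) (htc : 0 < tc) (hγ : 0 < γ)
    (V : ℝ → ℝ)
    (hcont : ContinuousOn V (Set.Ico 0 tc))
    (hdiff : ∀ t ∈ Set.Ioo (0 : ℝ) tc, DifferentiableAt ℝ V t)
    (hpos : ∀ t ∈ Set.Ico (0 : ℝ) tc, 0 < V t)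
    (hineq : ∀ t ∈ Set.Ioo (0 : ℝ) tc, deriv V t ≤ -(γ * (V t) ^ 2 / (tc - t))) :
    (∀ t ∈ Set.Ioo (0 : ℝ) tc,
        Real.log (tc / (tc - t)) ≤ (1 / γ) * (1 / V t - 1 / V 0)) ∧
    Filter.Tendsto V (nhdsWithin tc (Set.Iio tc)) (nhds 0) := by
  have hmono : MonotoneOn (fun t => (V t)⁻¹ + γ * Real.log (tc - t)) (Set.Ico 0 tc) := by
    apply monotoneOn_of_deriv_nonneg (convex_Ico 0 tc)
    · apply ContinuousOn.add
      · exact hcont.inv₀ (fun t ht => (hpos t ht).ne')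
      · apply ContinuousOn.mul continuousOn_const
        apply ContinuousOn.log (by fun_prop)
        intro t ht
        exact (sub_pos.mpr ht.2).ne'
    · rw [interior_Ico]
      intro t ht
      have hV := hpos t ⟨ht.1.le, ht.2⟩
      have hs : 0 < tc - t := sub_pos.mpr ht.2
      apply DifferentiableAt.differentiableWithinAt
      exact ((hdiff t ht).inv hV.ne').add
        ((((differentiableAt_const tc).sub differentiableAt_id).log hs.ne').const_mul γ)
    · rw [interior_Ico]
      intro t ht
      have hV := hpos t ⟨ht.1.le, ht.2⟩
      have hs : 0 < tc - t := sub_pos.mpr ht.2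
      have h1 := (hdiff t ht).hasDerivAt.inv hV.ne'
      have h2 := ((((hasDerivAt_id t).const_sub tc).log hs.ne').const_mul γ)
      have h3 : HasDerivAt (fun t => (V t)⁻¹ + γ * Real.log (tc - t)) _ t := h1.add h2
      rw [h3.deriv]
      have h4 := hineq t ht
      have h5 : γ / (tc - t) ≤ -deriv V t / V t ^ 2 := by
        rw [le_div_iff₀ (by positivity)]
        have : γ / (tc - t) * V t ^ 2 = γ * V t ^ 2 / (tc - t) := by ring
        linarith
      have h6 : γ * (-1 / (tc - t)) = -(γ / (tc - t)) := by ring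
      simp only [id] at *
      linarith
  have key : ∀ t ∈ Set.Ioo (0 : ℝ) tc,
      γ * (Real.log tc - Real.log (tc - t)) ≤ (V t)⁻¹ - (V 0)⁻¹ := by
    intro t ht
    have h := hmono ⟨le_refl 0, htc⟩ ⟨ht.1.le, ht.2⟩ ht.1.le
    simp only [sub_zero] at h
    linarith
  refine ⟨?_, ?_⟩
  · intro t ht
    have hs : 0 < tc - t := sub_pos.mpr ht.2
    rw [Real.log_div htc.ne' hs.ne', one_div_mul_eq_div, le_div_iff₀ hγ, one_div, one_div]
    linarith [key t ht]
  · have hev : ∀ᶠ t in nhdsWithin tc (Set.Iio tc), t ∈ Set.Ioo (0 : ℝ) tc :=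
      Ioo_mem_nhdsLT htc
    have h0 : Filter.Tendsto (fun t => tc - t) (nhdsWithin tc (Set.Iio tc))
        (nhdsWithin 0 (Set.Ioi 0)) := by
      apply tendsto_nhdsWithin_of_tendsto_nhds_of_eventually_within
      · have : Filter.Tendsto (fun t => tc - t) (nhds tc) (nhds (tc - tc)) :=
          (continuous_const.sub continuous_id).tendsto tc
        rw [sub_self] at this
        exact this.mono_left nhdsWithin_le_nhds
      · filter_upwards [hev] with t ht
        exact sub_pos.mpr ht.2
    have h1 := Real.tendsto_log_nhdsGT_zero.comp h0
    have h2 : Filter.Tendsto (fun t => ((V 0)⁻¹ + γ * Real.log tc) + γ * -Real.log (tc - t))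
        (nhdsWithin tc (Set.Iio tc)) Filter.atTop :=
      Filter.tendsto_atTop_add_const_left _ _
        ((Filter.tendsto_neg_atBot_atTop.comp h1).const_mul_atTop hγ)
    have h3 : Filter.Tendsto (fun t => (V t)⁻¹) (nhdsWithin tc (Set.Iio tc)) Filter.atTop := by
      apply Filter.tendsto_atTop_mono' _ _ h2
      filter_upwards [hev] with t ht
      linarith [key t ht]
    exact h3.inv_tendsto_atTop.congr (fun t => inv_inv (V t))
end

section
/- Let n ≥ 1, let 0 < α ≤ 1, γ > 0, ζ > 0, and let 0 < t_p < t_c < T. Suppose ε : ℝ → ℝⁿ is continuously differentiable on [t_c, T), ε(t_c) = 0, and at every t ∈ (t_c, T) with ε(t) ≠ 0 the derivative of ε satisfies the maintenance-phase FOZNN dynamics. Then ε(t) = 0 for every t ∈ [t_c, T). -/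
/-- If `ε` is continuously differentiable on `[t_c, T)`, `ε(t_c) = 0`, and at
every `t ∈ (t_c, T)` with `ε(t) ≠ 0` the derivative of `ε` satisfies the maintenance-phase
FOZNN dynamics, then `ε(t) = 0` for every `t ∈ [t_c, T)`. -/
theorem foznn_noise_free_maintenance
    (n : ℕ) (hn : 1 ≤ n) (α γ ζ tp tc T : ℝ)
    (hα0 : 0 < α) (hα1 : α ≤ 1) (hγ : 0 < γ) (hζ : 0 < ζ)
    (htp : 0 < tp) (htptc : tp < tc) (htcT : tc < T)
    (ε : ℝ → EuclideanSpace ℝ (Fin n))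
    (hC1 : ContDiffOn ℝ 1 ε (Set.Ico tc T))
    (hinit : ε tc = 0)
    (hdyn : ∀ t ∈ Set.Ioo tc T, ε t ≠ 0 →
      HasDerivAt ε
        (-((tp - t)⁻¹ • ε t +
           ((ζ + γ * t ^ (α - 1) * ‖ε t‖ ^ 2 / (tp - t) ^ 2) * ‖ε t‖⁻¹) • ε t)) t) :
    ∀ t ∈ Set.Ico tc T, ε t = 0 := by
  have hder : ∀ t ∈ Set.Ioo tc T, ∃ d : ℝ,
      HasDerivAt (fun s => ‖(s - tp)⁻¹ • ε s‖ ^ 2) d t ∧ d ≤ 0 := by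
    intro t ht
    have hs : 0 < t - tp := by linarith [ht.1]
    have h1 : HasDerivAt (fun s : ℝ => (s - tp)⁻¹) (-1 / (t - tp) ^ 2) t :=
      ((hasDerivAt_id t).sub_const tp).inv hs.ne'
    by_cases h0 : ε t = 0
    · have hd : DifferentiableAt ℝ ε t :=
        ((hC1.differentiableOn one_ne_zero) t ⟨ht.1.le, ht.2⟩).differentiableAt
          (Ico_mem_nhds ht.1 ht.2)
      refine ⟨_, (h1.smul hd.hasDerivAt).norm_sq, ?_⟩
      simp [h0]
    · refine ⟨_, (h1.smul (hdyn t ht h0)).norm_sq, ?_⟩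
      have ht0 : 0 < t := by linarith [ht.1]
      have hk : 0 ≤ (ζ + γ * t ^ (α - 1) * ‖ε t‖ ^ 2 / (tp - t) ^ 2) * ‖ε t‖⁻¹ := by
        positivity
      generalize (ζ + γ * t ^ (α - 1) * ‖ε t‖ ^ 2 / (tp - t) ^ 2) * ‖ε t‖⁻¹ = k at hk
      have e : (t - tp)⁻¹ • -((tp - t)⁻¹ • ε t + k • ε t) + (-1 / (t - tp) ^ 2) • ε t
          = (-(k / (t - tp))) • ε t := by
        rw [← add_smul, ← neg_smul, smul_smul, ← add_smul]
        congr 1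
        rw [← neg_sub t tp, inv_neg]
        field_simp
        ring
      rw [e]
      simp only [Pi.smul_apply', real_inner_smul_left, real_inner_smul_right,
        real_inner_self_eq_norm_sq]
      have : 0 ≤ (t - tp)⁻¹ * (k / (t - tp) * ‖ε t‖ ^ 2) := by positivity
      linarith
  have hinv : ContinuousOn (fun s : ℝ => (s - tp)⁻¹) (Set.Ico tc T) := by
    refine ContinuousOn.inv₀ (continuousOn_id.sub continuousOn_const) ?_
    intro s hs
    have h1 := hs.1
    have h2 : 0 < s - tp := by linarith
    exact h2.ne'
  have hcont0 : ContinuousOn (fun s => (s - tp)⁻¹ • ε s) (Set.Ico tc T) :=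
    hinv.smul hC1.continuousOn
  have hcont : ContinuousOn (fun s => ‖(s - tp)⁻¹ • ε s‖ ^ 2) (Set.Ico tc T) :=
    hcont0.norm.pow 2
  have hanti : AntitoneOn (fun s => ‖(s - tp)⁻¹ • ε s‖ ^ 2) (Set.Ico tc T) := by
    apply antitoneOn_of_deriv_nonpos (convex_Ico tc T)
    · exact hcont
    · rw [interior_Ico]
      intro t ht
      obtain ⟨d, hd, _⟩ := hder t ht
      exact hd.differentiableAt.differentiableWithinAt
    · rw [interior_Ico]
      intro t ht
      obtain ⟨d, hd, h⟩ := hder t ht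
      rwa [hd.deriv]
  intro t ht
  have h := hanti ⟨le_rfl, htcT⟩ ht ht.1
  simp only [hinit, smul_zero, norm_zero] at h
  have h2 : ‖(t - tp)⁻¹ • ε t‖ = 0 := by
    have := norm_nonneg ((t - tp)⁻¹ • ε t)
    nlinarith
  have hs : (t - tp) ≠ 0 := by
    have := ht.1
    exact (by linarith : 0 < t - tp).ne'
  rw [norm_eq_zero, smul_eq_zero] at h2
  exact h2.resolve_left (inv_ne_zero hs)
end

section
/- Let n ≥ 1, let 0 < α ≤ 1, γ > 0, ζ > 0, and let 0 < t_p < t_c < T. Suppose t ∈ (t_c, T), ε : ℝ → ℝⁿ is differentiable in a neighborhood of t, ε is nonvanishing near t, and ε satisfies the maintenance-phase FOZNN dynamics at every point near t. Define V(s) = ‖ε(s)‖/(s − t_p). Then V is differentiable at t with V'(t) ≤ −γ t^{α−1} V(t)²/(t − t_p) − ζ/(t − t_p) < 0. -/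
/-- If near `t ∈ (t_c, T)` the map `ε` is nonvanishing and satisfies the
maintenance-phase FOZNN dynamics, then `V(s) = ‖ε(s)‖/(s − t_p)` is differentiable at `t`
with `V'(t) ≤ −γ t^{α−1} V(t)²/(t − t_p) − ζ/(t − t_p) < 0`. -/
theorem foznn_noise_free_maintenance_lyapunov
    (n : ℕ) (hn : 1 ≤ n) (α γ ζ tp tc T : ℝ)
    (hα0 : 0 < α) (hα1 : α ≤ 1) (hγ : 0 < γ) (hζ : 0 < ζ)
    (htp : 0 < tp) (htptc : tp < tc) (htcT : tc < T)
    (ε : ℝ → EuclideanSpace ℝ (Fin n))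
    (t : ℝ) (ht : t ∈ Set.Ioo tc T)
    (hdyn : ∀ᶠ s in nhds t, ε s ≠ 0 ∧
      HasDerivAt ε
        (-((tp - s)⁻¹ • ε s +
           ((ζ + γ * s ^ (α - 1) * ‖ε s‖ ^ 2 / (tp - s) ^ 2) * ‖ε s‖⁻¹) • ε s)) s)
    (V : ℝ → ℝ) (hV : ∀ s, V s = ‖ε s‖ / (s - tp)) :
    DifferentiableAt ℝ V t ∧
    deriv V t ≤ -(γ * t ^ (α - 1) * (V t) ^ 2 / (t - tp)) - ζ / (t - tp) ∧
    -(γ * t ^ (α - 1) * (V t) ^ 2 / (t - tp)) - ζ / (t - tp) < 0 := by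
  obtain ⟨h0, hd⟩ := hdyn.self_of_nhds
  have hdp : 0 < t - tp := by linarith [ht.1]
  have ht0 : 0 < t := by linarith
  have hr : 0 < ‖ε t‖ := norm_pos_iff.mpr h0
  have hg : 0 < t ^ (α - 1) := Real.rpow_pos_of_pos ht0 _
  have hne : tp - t ≠ 0 := by linarith
  have hne' : t - tp ≠ 0 := hdp.ne'
  rw [← add_smul, ← neg_smul] at hd
  have hsq := hd.norm_sq
  have hs := hsq.sqrt (by positivity)
  simp only [Real.sqrt_sq (norm_nonneg _), inner_smul_right, real_inner_self_eq_norm_sq] at hs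
  have hV' := hs.div ((hasDerivAt_id t).sub_const tp) hne'
  have hVe : V = (fun s => ‖ε s‖) / (fun s => id s - tp) := by
    funext s
    simp [hV]
  rw [← hVe] at hV'
  refine ⟨hV'.differentiableAt, ?_, ?_⟩
  · rw [hV'.deriv, hV]
    apply le_of_eq
    have e : tp - t = -(t - tp) := by ring
    rw [e]
    simp only [id]
    generalize t - tp = d at *
    field_simp
    ring
  · have h1 : 0 ≤ γ * t ^ (α - 1) * (V t) ^ 2 / (t - tp) := by positivity
    have h2 : 0 < ζ / (t - tp) := by positivity
    linarith
end

section
/- Let n ≥ 1, let 0 < α ≤ 1, γ > 0, t_c > 0, Δ ≥ 0, and let δ : ℝ → ℝⁿ satisfy ‖δ(t)‖ ≤ Δ for all t. Suppose ε : ℝ → ℝⁿ is continuous on [0, t_c) and follows the noise-perturbed FOZNN convergence-phase dynamics with noise δ on (0, t_c). Then ε(t) tends to 0 as t tends to t_c from the left. -/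
/-- For `ε` continuous on `[0, t_c)` following the noise-perturbed FOZNN
convergence-phase dynamics with bounded noise `δ` on `(0, t_c)`, `ε(t) → 0` as `t → t_c⁻`. -/
theorem foznn_noisy_convergence
    (n : ℕ) (hn : 1 ≤ n) (α γ tc Δ : ℝ)
    (hα0 : 0 < α) (hα1 : α ≤ 1) (hγ : 0 < γ) (htc : 0 < tc) (hΔ : 0 ≤ Δ)
    (δ : ℝ → EuclideanSpace ℝ (Fin n)) (hδ : ∀ t, ‖δ t‖ ≤ Δ)
    (ε : ℝ → EuclideanSpace ℝ (Fin n))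
    (hcont : ContinuousOn ε (Set.Ico 0 tc))
    (hdyn : ∀ t ∈ Set.Ioo (0 : ℝ) tc, ε t ≠ 0 ∧
      HasDerivAt ε
        ((-(t ^ (α - 1) / tc ^ (α - 1)) *
          (1 / (tc - t) + γ * ‖ε t‖ / (tc - t) ^ 2)) • ε t + δ t) t) :
    Filter.Tendsto ε (nhdsWithin tc (Set.Iio tc)) (nhds 0) := by
  obtain ⟨C, hC0, hCb, hCΔ⟩ : ∃ C : ℝ, 0 < C ∧ ‖ε (tc / 2)‖ ≤ C * (tc / 2) ∧
      Δ < γ * C ^ 2 := by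
    have h1 : 0 ≤ ‖ε (tc / 2)‖ / (tc / 2) := by positivity
    have h2 : 0 ≤ Δ / γ := by positivity
    refine ⟨‖ε (tc / 2)‖ / (tc / 2) + Δ / γ + 1, by positivity, ?_, ?_⟩
    · have h3 : ‖ε (tc / 2)‖ = ‖ε (tc / 2)‖ / (tc / 2) * (tc / 2) := by field_simp
      calc ‖ε (tc / 2)‖ = ‖ε (tc / 2)‖ / (tc / 2) * (tc / 2) := h3
        _ ≤ _ := by
          apply mul_le_mul_of_nonneg_right _ (by positivity)
          linarith
    · have h3 : Δ = γ * (Δ / γ) := by field_simp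
      calc Δ = γ * (Δ / γ) := h3
        _ < _ := by
          apply mul_lt_mul_of_pos_left _ hγ
          nlinarith
  have key : ∀ t ∈ Set.Ico (tc / 2) tc, ‖ε t‖ ≤ C * (tc - t) := by
    intro b hb
    have hmem : ∀ x ∈ Set.Icc (tc / 2) b, x ∈ Set.Ioo (0 : ℝ) tc := fun x hx =>
      ⟨by linarith [hx.1], lt_of_le_of_lt hx.2 hb.2⟩
    have hsq : ∀ ⦃x⦄, x ∈ Set.Icc (tc / 2) b → ‖ε x‖ ^ 2 ≤ (C * (tc - x)) ^ 2 := by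
      refine image_le_of_deriv_right_lt_deriv_boundary'
        (f' := fun x => 2 * inner ℝ (ε x) ((-(x ^ (α - 1) / tc ^ (α - 1)) *
          (1 / (tc - x) + γ * ‖ε x‖ / (tc - x) ^ 2)) • ε x + δ x))
        (B' := fun x => 2 * (C * (tc - x)) * (-C)) ?_ ?_ ?_ ?_ ?_ ?_
      · intro x hx
        exact ((hdyn x (hmem x hx)).2.norm_sq).continuousAt.continuousWithinAt
      · intro x hx
        exact ((hdyn x (hmem x ⟨hx.1, hx.2.le⟩)).2.norm_sq).hasDerivWithinAt
      · have h5 : C * (tc - tc / 2) = C * (tc / 2) := by ring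
        rw [h5]
        exact pow_le_pow_left₀ (norm_nonneg _) hCb 2
      · fun_prop
      · intro x hx
        have h : HasDerivAt (fun x : ℝ => (C * (tc - x)) ^ 2) (2 * (C * (tc - x)) * (-C)) x := by
          have := (((hasDerivAt_id x).const_sub tc).const_mul C).pow 2
          exact this.congr_deriv (by norm_num)
        exact h.hasDerivWithinAt
      · intro x hx heq
        have hx' := hmem x ⟨hx.1, hx.2.le⟩
        have hs : 0 < tc - x := by linarith [hx'.2]
        have hr : ‖ε x‖ = C * (tc - x) :=
          (pow_left_inj₀ (norm_nonneg _) (by positivity) two_ne_zero).1 heq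
        have hk : 1 ≤ x ^ (α - 1) / tc ^ (α - 1) := by
          rw [one_le_div (Real.rpow_pos_of_pos htc _)]
          exact Real.rpow_le_rpow_of_nonpos hx'.1 hx'.2.le (by linarith)
        have hin : inner ℝ (ε x) (δ x) ≤ C * (tc - x) * Δ := by
          calc inner ℝ (ε x) (δ x) ≤ ‖ε x‖ * ‖δ x‖ := real_inner_le_norm _ _
            _ ≤ _ := by
              rw [hr]
              exact mul_le_mul_of_nonneg_left (hδ x) (by positivity)
        generalize x ^ (α - 1) / tc ^ (α - 1) = k at hk
        simp only [inner_add_right, inner_smul_right, real_inner_self_eq_norm_sq]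
        rw [hr]
        generalize tc - x = s at *
        have e : -k * (1 / s + γ * (C * s) / s ^ 2) * (C * s) ^ 2
            = - (k * (C ^ 2 * s * (1 + γ * C))) := by
          field_simp
        rw [e]
        have h6 : C ^ 2 * s * (1 + γ * C) ≤ k * (C ^ 2 * s * (1 + γ * C)) :=
          le_mul_of_one_le_left (by positivity) hk
        have h7 : C * s * Δ < C * s * (γ * C ^ 2) :=
          mul_lt_mul_of_pos_left hCΔ (by positivity)
        nlinarith
    have h8 := hsq (Set.right_mem_Icc.2 hb.1)
    exact (pow_le_pow_iff_left₀ (norm_nonneg _) (mul_nonneg hC0.le (by linarith [hb.2])) two_ne_zero).1 h8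
  have hlim : Filter.Tendsto (fun t => C * (tc - t)) (nhdsWithin tc (Set.Iio tc)) (nhds 0) := by
    have : Continuous (fun t => C * (tc - t)) := by fun_prop
    have h := this.tendsto tc
    simp only [sub_self, mul_zero] at h
    exact h.mono_left nhdsWithin_le_nhds
  refine squeeze_zero_norm' ?_ hlim
  filter_upwards [Ico_mem_nhdsLT (show tc / 2 < tc by linarith)] with t ht
  exact key t ht
end

section
/- Let n ≥ 1, let 0 < α ≤ 1, γ > 0, t_c > 0, Δ ≥ 0, and let δ : ℝ → ℝⁿ satisfy ‖δ(t)‖ ≤ Δ for all t. Suppose ε : ℝ → ℝⁿ follows the noise-perturbed FOZNN convergence-phase dynamics with noise δ on (0, t_c). Define V(t) = ‖ε(t)‖/(t_c − t). Then for every t ∈ (0, t_c), V is differentiable at t and its derivative satisfies V'(t) ≤ (Δ − γ V(t)²)/(t_c − t). -/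
/-- For `ε` following the noise-perturbed FOZNN convergence-phase dynamics
with bounded noise `δ` on `(0, t_c)` and `V(t) = ‖ε(t)‖/(t_c − t)`, for every
`t ∈ (0, t_c)` the function `V` is differentiable at `t` with
`V'(t) ≤ (Δ − γ V(t)²)/(t_c − t)`. -/
theorem foznn_noisy_lyapunov_derivative
    (n : ℕ) (hn : 1 ≤ n) (α γ tc Δ : ℝ)
    (hα0 : 0 < α) (hα1 : α ≤ 1) (hγ : 0 < γ) (htc : 0 < tc) (hΔ : 0 ≤ Δ)
    (δ : ℝ → EuclideanSpace ℝ (Fin n)) (hδ : ∀ t, ‖δ t‖ ≤ Δ)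
    (ε : ℝ → EuclideanSpace ℝ (Fin n))
    (hdyn : ∀ t ∈ Set.Ioo (0 : ℝ) tc, ε t ≠ 0 ∧
      HasDerivAt ε
        ((-(t ^ (α - 1) / tc ^ (α - 1)) *
          (1 / (tc - t) + γ * ‖ε t‖ / (tc - t) ^ 2)) • ε t + δ t) t)
    (V : ℝ → ℝ) (hV : ∀ t, V t = ‖ε t‖ / (tc - t)) :
    ∀ t ∈ Set.Ioo (0 : ℝ) tc,
      DifferentiableAt ℝ V t ∧
      deriv V t ≤ (Δ - γ * (V t) ^ 2) / (tc - t) := by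
  intro t ht
  obtain ⟨hne, hd⟩ := hdyn t ht
  have hs : 0 < tc - t := sub_pos.mpr ht.2
  have hr : 0 < ‖ε t‖ := norm_pos_iff.mpr hne
  have hk : 1 ≤ t ^ (α - 1) / tc ^ (α - 1) := by
    rw [one_le_div (Real.rpow_pos_of_pos htc _)]
    exact Real.rpow_le_rpow_of_nonpos ht.1 ht.2.le (by linarith)
  set k := t ^ (α - 1) / tc ^ (α - 1) with hkdef
  set c := 1 / (tc - t) + γ * ‖ε t‖ / (tc - t) ^ 2 with hc
  have hcpos : 0 < c := by positivity
  have hnorm := (hd.norm_sq).sqrt (by positivity)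
  simp only [Real.sqrt_sq (norm_nonneg _)] at hnorm
  have hden : HasDerivAt (fun u : ℝ => tc - u) (-1) t := by
    simpa using (hasDerivAt_id t).const_sub tc
  have hVd := hnorm.div hden hs.ne'
  have hVe : V = (fun u => ‖ε u‖) / (fun u => tc - u) := by
    funext u
    simp [hV u]
  rw [← hVe] at hVd
  refine ⟨hVd.differentiableAt, ?_⟩
  rw [hVd.deriv, hV t]
  have hin : inner ℝ (ε t) (δ t) ≤ ‖ε t‖ * Δ :=
    (real_inner_le_norm _ _).trans (mul_le_mul_of_nonneg_left (hδ t) hr.le)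
  have hr' : 2 * inner ℝ (ε t) ((-k * c) • ε t + δ t) / (2 * ‖ε t‖)
      ≤ Δ - c * ‖ε t‖ := by
    rw [inner_add_right, real_inner_smul_right, real_inner_self_eq_norm_sq,
      div_le_iff₀ (by positivity)]
    have h1 : 0 ≤ (k - 1) * (c * ‖ε t‖ ^ 2) :=
      mul_nonneg (by linarith) (by positivity)
    nlinarith
  calc _ ≤ ((Δ - c * ‖ε t‖) * (tc - t) - ‖ε t‖ * (-1)) / (tc - t) ^ 2 := by
        gcongr
    _ = _ := by
        rw [hc]
        field_simp
        ring
end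

section
/- Let t_c > 0, γ > 0, Δ ≥ 0. Let V : ℝ → ℝ be continuous on [0, t_c), nonnegative on [0, t_c), differentiable at every t ∈ (0, t_c), and satisfy V'(t) ≤ (Δ − γ V(t)²)/(t_c − t) for all t ∈ (0, t_c). Then V(t) ≤ max(V(0), √(Δ/γ)) for every t ∈ [0, t_c); consequently (t_c − t)·V(t) tends to 0 as t tends to t_c from the left. -/
/-- Scalar comparison lemma: if `V ≥ 0` is continuous on `[0, t_c)`,
differentiable on `(0, t_c)` with `V'(t) ≤ (Δ − γ V(t)²)/(t_c − t)`, then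
`V(t) ≤ max(V(0), √(Δ/γ))` on `[0, t_c)`, and consequently `(t_c − t)·V(t) → 0`
as `t → t_c⁻`. -/
theorem scalar_comparison_noisy
    (tc γ Δ : ℝ) (htc : 0 < tc) (hγ : 0 < γ) (hΔ : 0 ≤ Δ)
    (V : ℝ → ℝ)
    (hcont : ContinuousOn V (Set.Ico 0 tc))
    (hnonneg : ∀ t ∈ Set.Ico (0 : ℝ) tc, 0 ≤ V t)
    (hdiff : ∀ t ∈ Set.Ioo (0 : ℝ) tc, DifferentiableAt ℝ V t)
    (hineq : ∀ t ∈ Set.Ioo (0 : ℝ) tc, deriv V t ≤ (Δ - γ * (V t) ^ 2) / (tc - t)) :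
    (∀ t ∈ Set.Ico (0 : ℝ) tc, V t ≤ max (V 0) (Real.sqrt (Δ / γ))) ∧
    Filter.Tendsto (fun t => (tc - t) * V t) (nhdsWithin tc (Set.Iio tc)) (nhds 0) := by
  have key : ∀ t ∈ Set.Ico (0 : ℝ) tc, V t ≤ max (V 0) (Real.sqrt (Δ / γ)) := by
    intro t ht
    rcases eq_or_lt_of_le ht.1 with h0 | h0
    · rw [← h0]; exact le_max_left _ _
    apply le_of_forall_pos_le_add
    intro ε hε
    set M := max (V 0) (Real.sqrt (Δ / γ)) with hM
    have hM1 : V 0 ≤ M := le_max_left _ _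
    have hM2 : Real.sqrt (Δ / γ) ≤ M := le_max_right _ _
    have hc0 : ContinuousWithinAt V (Set.Ico 0 tc) 0 := hcont 0 ⟨le_refl _, htc⟩
    have hev : ∀ᶠ a in nhdsWithin (0 : ℝ) (Set.Ioo 0 t), V a < M + ε := by
      have h1 : nhdsWithin (0 : ℝ) (Set.Ioo 0 t) ≤ nhdsWithin 0 (Set.Ico 0 tc) :=
        nhdsWithin_mono _ (fun x hx => ⟨hx.1.le, hx.2.trans ht.2⟩)
      exact (hc0.mono_left h1).eventually_lt_const (by linarith)
    rw [nhdsWithin_Ioo_eq_nhdsGT h0] at hev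
    obtain ⟨a, ha, haI⟩ := (hev.and (Ioo_mem_nhdsGT h0)).exists
    have hsub : ∀ x ∈ Set.Icc a t, x ∈ Set.Ioo (0 : ℝ) tc :=
      fun x hx => ⟨haI.1.trans_le hx.1, hx.2.trans_lt ht.2⟩
    refine image_le_of_deriv_right_lt_deriv_boundary (f := V) (f' := deriv V)
      (B := fun _ => M + ε) (B' := fun _ => 0) (a := a) (b := t) ?_ ?_ ha.le ?_ ?_ ⟨haI.2.le, le_refl _⟩
    · exact hcont.mono (fun x hx => ⟨(hsub x hx).1.le, (hsub x hx).2⟩)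
    · intro x hx
      exact (hdiff x (hsub x ⟨hx.1, hx.2.le⟩)).hasDerivAt.hasDerivWithinAt
    · intro x; exact hasDerivAt_const _ _
    · intro x hx hVx
      have hxI := hsub x ⟨hx.1, hx.2.le⟩
      refine (hineq x hxI).trans_lt (div_neg_of_neg_of_pos ?_ (by linarith [hxI.2]))
      have h2 : Real.sqrt (Δ / γ) < V x := by
        have h3 : V x = M + ε := hVx
        linarith
      have h4 : Δ / γ < V x ^ 2 :=
        (Real.sqrt_lt' (lt_of_le_of_lt (Real.sqrt_nonneg _) h2)).1 h2
      rw [div_lt_iff₀ hγ] at h4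
      linarith
  refine ⟨key, ?_⟩
  have hmem : Set.Ioo 0 tc ∈ nhdsWithin tc (Set.Iio tc) := Ioo_mem_nhdsLT htc
  refine tendsto_of_tendsto_of_tendsto_of_le_of_le' (g := fun _ => (0 : ℝ))
    (h := fun t => (tc - t) * max (V 0) (Real.sqrt (Δ / γ))) tendsto_const_nhds ?_ ?_ ?_
  · have h : Continuous (fun t : ℝ => (tc - t) * max (V 0) (Real.sqrt (Δ / γ))) := by fun_prop
    have h' := h.tendsto tc
    simp only [sub_self, zero_mul] at h'
    exact h'.mono_left nhdsWithin_le_nhds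
  · filter_upwards [hmem] with t ht
    exact mul_nonneg (by linarith [ht.2]) (hnonneg t ⟨ht.1.le, ht.2⟩)
  · filter_upwards [hmem] with t ht
    exact mul_le_mul_of_nonneg_left (key t ⟨ht.1.le, ht.2⟩) (by linarith [ht.2])
end

section
/- Let n ≥ 1, let 0 < α ≤ 1, γ > 0, and let 0 ≤ Δ < ζ, 0 < t_p < t_c < T. Let δ : ℝ → ℝⁿ satisfy ‖δ(t)‖ ≤ Δ for all t. Suppose ε : ℝ → ℝⁿ is continuously differentiable on [t_c, T), ε(t_c) = 0, and at every t ∈ (t_c, T) with ε(t) ≠ 0, ε is differentiable at t with ε'(t) equal to the maintenance-phase FOZNN right-hand side plus δ(t). Then ε(t) = 0 for every t ∈ [t_c, T). -/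
/-- If `ε` is continuously differentiable on `[t_c, T)`, `ε(t_c) = 0`, and at
every `t ∈ (t_c, T)` with `ε(t) ≠ 0` the derivative of `ε` equals the maintenance-phase
FOZNN right-hand side plus a noise `δ(t)` bounded by `Δ < ζ`, then `ε(t) = 0` on `[t_c, T)`. -/
theorem foznn_noisy_maintenance
    (n : ℕ) (hn : 1 ≤ n) (α γ ζ Δ tp tc T : ℝ)
    (hα0 : 0 < α) (hα1 : α ≤ 1) (hγ : 0 < γ)
    (hΔ0 : 0 ≤ Δ) (hΔζ : Δ < ζ)
    (htp : 0 < tp) (htptc : tp < tc) (htcT : tc < T)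
    (δ : ℝ → EuclideanSpace ℝ (Fin n)) (hδ : ∀ t, ‖δ t‖ ≤ Δ)
    (ε : ℝ → EuclideanSpace ℝ (Fin n))
    (hC1 : ContDiffOn ℝ 1 ε (Set.Ico tc T))
    (hinit : ε tc = 0)
    (hdyn : ∀ t ∈ Set.Ioo tc T, ε t ≠ 0 →
      HasDerivAt ε
        (-((tp - t)⁻¹ • ε t +
           ((ζ + γ * t ^ (α - 1) * ‖ε t‖ ^ 2 / (tp - t) ^ 2) * ‖ε t‖⁻¹) • ε t) + δ t) t) :
    ∀ t ∈ Set.Ico tc T, ε t = 0 := by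
  have hdiff : ∀ t ∈ Set.Ioo tc T, HasDerivAt ε (deriv ε t) t := by
    intro t ht
    have h1 := (hC1.differentiableOn (by norm_num)) t ⟨ht.1.le, ht.2⟩
    exact (h1.differentiableAt (Ico_mem_nhds ht.1 ht.2)).hasDerivAt
  have key : ∀ t ∈ Set.Ioo tc T, inner ℝ (ε t) (deriv ε t) ≤ (t - tp)⁻¹ * ‖ε t‖ ^ 2 := by
    intro t ht
    by_cases h0 : ε t = 0
    · simp [h0]
    rw [(hdyn t ht h0).deriv]
    have hpos : 0 < ‖ε t‖ := norm_pos_iff.mpr h0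
    have ht0 : 0 < t := by linarith [ht.1]
    have hd : inner ℝ (ε t) (δ t) ≤ ‖ε t‖ * Δ :=
      (real_inner_le_norm _ _).trans (mul_le_mul_of_nonneg_left (hδ t) hpos.le)
    have hg : 0 ≤ γ * t ^ (α - 1) * ‖ε t‖ ^ 2 / (tp - t) ^ 2 := by positivity
    set g := γ * t ^ (α - 1) * ‖ε t‖ ^ 2 / (tp - t) ^ 2
    have hs : (tp - t)⁻¹ = -(t - tp)⁻¹ := by rw [← inv_neg, neg_sub]
    rw [inner_add_right, inner_neg_right, inner_add_right, inner_smul_right, inner_smul_right,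
      real_inner_self_eq_norm_sq, hs]
    have h2 : (ζ + g) * ‖ε t‖⁻¹ * ‖ε t‖ ^ 2 = (ζ + g) * ‖ε t‖ := by field_simp
    rw [h2]
    nlinarith [mul_nonneg hg hpos.le, mul_pos (sub_pos.mpr hΔζ) hpos]
  have hW : ∀ t ∈ Set.Ioo tc T, HasDerivAt (fun t => ‖ε t‖ ^ 2 * ((t - tp)⁻¹) ^ 2)
      (2 * ((t - tp)⁻¹) ^ 2 * (inner ℝ (ε t) (deriv ε t) - (t - tp)⁻¹ * ‖ε t‖ ^ 2)) t := by
    intro t ht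
    have hne : t - tp ≠ 0 := (by linarith [ht.1] : 0 < t - tp).ne'
    have h1 := (hdiff t ht).norm_sq
    have h2 := ((((hasDerivAt_id t).sub_const tp).inv hne).pow 2)
    refine (h1.mul h2).congr_deriv ?_
    simp
    field_simp
    ring
  have hanti : AntitoneOn (fun t => ‖ε t‖ ^ 2 * ((t - tp)⁻¹) ^ 2) (Set.Ico tc T) := by
    apply antitoneOn_of_deriv_nonpos (convex_Ico tc T)
    · refine (hC1.continuousOn.norm.pow 2).mul (ContinuousOn.pow (ContinuousOn.inv₀ (by fun_prop) ?_) 2)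
      intro t ht
      have := ht.1
      exact (by linarith : 0 < t - tp).ne'
    · rw [interior_Ico]
      exact fun t ht => (hW t ht).differentiableAt.differentiableWithinAt
    · rw [interior_Ico]
      intro t ht
      rw [(hW t ht).deriv]
      exact mul_nonpos_of_nonneg_of_nonpos (by positivity) (sub_nonpos.mpr (key t ht))
  intro t ht
  have h := hanti ⟨le_refl tc, htcT⟩ ht ht.1
  have hp : 0 < t - tp := by linarith [ht.1]
  simp only [hinit, norm_zero] at h
  by_contra h0
  have hpos : 0 < ‖ε t‖ := norm_pos_iff.mpr h0
  have : 0 < ‖ε t‖ ^ 2 * ((t - tp)⁻¹) ^ 2 := by positivity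
  have hz : (0 : ℝ) ^ 2 * ((tc - tp)⁻¹) ^ 2 = 0 := by ring
  linarith
end

section
/- Let n ≥ 1, let 0 < α ≤ 1, γ > 0, 0 ≤ Δ < ζ, and 0 < t_p < t_c < T. Let δ : ℝ → ℝⁿ satisfy ‖δ(t)‖ ≤ Δ for all t. Suppose t ∈ (t_c, T), ε : ℝ → ℝⁿ is differentiable and nonvanishing in a neighborhood of t, and in that neighborhood ε'(s) equals the maintenance-phase FOZNN right-hand side at s plus δ(s). Define V(s) = ‖ε(s)‖/(s − t_p). Then V is differentiable at t with V'(t) ≤ −γ t^{α−1} V(t)²/(t − t_p) − (ζ − Δ)/(t − t_p) < 0. -/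
/-- If near `t ∈ (t_c, T)` the map `ε` is nonvanishing and its derivative
equals the maintenance-phase FOZNN right-hand side plus a noise `δ` bounded by `Δ < ζ`,
then `V(s) = ‖ε(s)‖/(s − t_p)` is differentiable at `t` with
`V'(t) ≤ −γ t^{α−1} V(t)²/(t − t_p) − (ζ − Δ)/(t − t_p) < 0`. -/
theorem foznn_noisy_maintenance_lyapunov
    (n : ℕ) (hn : 1 ≤ n) (α γ ζ Δ tp tc T : ℝ)
    (hα0 : 0 < α) (hα1 : α ≤ 1) (hγ : 0 < γ)
    (hΔ0 : 0 ≤ Δ) (hΔζ : Δ < ζ)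
    (htp : 0 < tp) (htptc : tp < tc) (htcT : tc < T)
    (δ : ℝ → EuclideanSpace ℝ (Fin n)) (hδ : ∀ t, ‖δ t‖ ≤ Δ)
    (ε : ℝ → EuclideanSpace ℝ (Fin n))
    (t : ℝ) (ht : t ∈ Set.Ioo tc T)
    (hdyn : ∀ᶠ s in nhds t, ε s ≠ 0 ∧
      HasDerivAt ε
        (-((tp - s)⁻¹ • ε s +
           ((ζ + γ * s ^ (α - 1) * ‖ε s‖ ^ 2 / (tp - s) ^ 2) * ‖ε s‖⁻¹) • ε s) + δ s) s)
    (V : ℝ → ℝ) (hV : ∀ s, V s = ‖ε s‖ / (s - tp)) :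
    DifferentiableAt ℝ V t ∧
    deriv V t ≤ -(γ * t ^ (α - 1) * (V t) ^ 2 / (t - tp)) - (ζ - Δ) / (t - tp) ∧
    -(γ * t ^ (α - 1) * (V t) ^ 2 / (t - tp)) - (ζ - Δ) / (t - tp) < 0 := by
  obtain ⟨hne, hd⟩ := hdyn.self_of_nhds
  have hdpos : 0 < t - tp := by linarith [ht.1]
  have htpos : 0 < t := by linarith
  have hr : 0 < ‖ε t‖ := norm_pos_iff.mpr hne
  have hp : 0 < t ^ (α - 1) := Real.rpow_pos_of_pos htpos _
  have hin : inner ℝ (ε t) (δ t) ≤ ‖ε t‖ * Δ :=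
    (real_inner_le_norm _ _).trans (mul_le_mul_of_nonneg_left (hδ t) hr.le)
  have h1 := hd.norm_sq.sqrt (by positivity)
  have hVeq : V = fun s => √(‖ε s‖ ^ 2) / (s - tp) := by
    funext s
    rw [hV s, Real.sqrt_sq (norm_nonneg _)]
  have h2 := h1.fun_div ((hasDerivAt_id t).sub_const tp) hdpos.ne'
  simp only [id] at h2
  rw [← hVeq] at h2
  refine ⟨h2.differentiableAt, ?_, ?_⟩
  · rw [h2.deriv, hV t, Real.sqrt_sq hr.le, inner_add_right, inner_neg_right, inner_add_right,
      real_inner_smul_right, real_inner_smul_right, real_inner_self_eq_norm_sq]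
    have e : tp - t = -(t - tp) := by ring
    rw [e]
    generalize t - tp = d at *
    generalize ‖ε t‖ = r at *
    generalize inner ℝ (ε t) (δ t) = w at *
    generalize t ^ (α - 1) = p at *
    have hw : w / r ≤ Δ := by
      rw [div_le_iff₀ hr]
      linarith
    have key : (2 * (-((-d)⁻¹ * r ^ 2 + (ζ + γ * p * r ^ 2 / (-d) ^ 2) * r⁻¹ * r ^ 2) + w)
        / (2 * r) * d - r * 1) / d ^ 2
        = -(γ * p * (r / d) ^ 2 / d) - (ζ - w / r) / d := by
      rw [inv_neg, neg_sq]
      field_simp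
      ring
    rw [key]
    gcongr
  · have a : 0 < (ζ - Δ) / (t - tp) := div_pos (by linarith) hdpos
    have b : 0 ≤ γ * t ^ (α - 1) * (V t) ^ 2 / (t - tp) := by positivity
    linarith
end

section
/- Let n ≥ 1, let 1 < α ≤ 2, γ > 0, t_c > 0, and suppose ε : ℝ → ℝⁿ follows the noise-free FOZNN convergence-phase dynamics on (0, t_c), now with order parameter α ∈ (1, 2]. Define V(t) = ‖ε(t)‖/(t_c − t). Then for every t ∈ (0, t_c), V is differentiable at t and its derivative satisfies V'(t) ≤ −γ t V(t)²/(t_c (t_c − t)) + V(t)/t_c. -/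
/-- For `1 < α ≤ 2` and `ε` following the noise-free FOZNN convergence-phase
dynamics on `(0, t_c)`, with `V(t) = ‖ε(t)‖/(t_c − t)`, for every `t ∈ (0, t_c)` the function
`V` is differentiable at `t` with `V'(t) ≤ −γ t V(t)²/(t_c (t_c − t)) + V(t)/t_c`. -/
theorem foznn_higher_order_lyapunov_derivative
    (n : ℕ) (hn : 1 ≤ n) (α γ tc : ℝ)
    (hα1 : 1 < α) (hα2 : α ≤ 2) (hγ : 0 < γ) (htc : 0 < tc)
    (ε : ℝ → EuclideanSpace ℝ (Fin n))
    (hdyn : ∀ t ∈ Set.Ioo (0 : ℝ) tc, ε t ≠ 0 ∧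
      HasDerivAt ε
        ((-(t ^ (α - 1) / tc ^ (α - 1)) *
          (1 / (tc - t) + γ * ‖ε t‖ / (tc - t) ^ 2)) • ε t) t)
    (V : ℝ → ℝ) (hV : ∀ t, V t = ‖ε t‖ / (tc - t)) :
    ∀ t ∈ Set.Ioo (0 : ℝ) tc,
      DifferentiableAt ℝ V t ∧
      deriv V t ≤ -(γ * t * (V t) ^ 2 / (tc * (tc - t))) + V t / tc := by
  intro t ht
  obtain ⟨hne, hd⟩ := hdyn t ht
  obtain ⟨ht0, ht1⟩ := ht
  have hdpos : 0 < tc - t := sub_pos.mpr ht1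
  have hN : 0 < ‖ε t‖ := norm_pos_iff.mpr hne
  have hs : t / tc ≤ t ^ (α - 1) / tc ^ (α - 1) := by
    rw [← Real.div_rpow ht0.le htc.le]
    have h := Real.rpow_le_rpow_of_exponent_ge (x := t / tc) (by positivity)
      ((div_le_one htc).mpr ht1.le) (show α - 1 ≤ 1 by linarith)
    simpa using h
  generalize t ^ (α - 1) / tc ^ (α - 1) = s at hd hs
  generalize hc : -s * (1 / (tc - t) + γ * ‖ε t‖ / (tc - t) ^ 2) = c at hd
  have hnorm : HasDerivAt (fun x => ‖ε x‖) (c * ‖ε t‖) t := by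
    have h1 := (hd.norm_sq).sqrt (by positivity)
    have h2 : (fun x => √(‖ε x‖ ^ 2)) = fun x => ‖ε x‖ := by
      funext x
      exact Real.sqrt_sq (norm_nonneg _)
    rw [h2] at h1
    convert h1 using 1
    rw [Real.sqrt_sq (norm_nonneg _), real_inner_smul_right, real_inner_self_eq_norm_sq]
    field_simp
  have hden : HasDerivAt (fun x : ℝ => tc - x) (-1) t := by
    simpa using (hasDerivAt_id t).const_sub tc
  have hVd : HasDerivAt V ((c * ‖ε t‖ * (tc - t) - ‖ε t‖ * (-1)) / (tc - t) ^ 2) t := by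
    have h3 : V = fun x => ‖ε x‖ / (tc - x) := funext hV
    rw [h3]
    exact hnorm.div hden hdpos.ne'
  refine ⟨hVd.differentiableAt, ?_⟩
  rw [hVd.deriv, hV t, ← hc]
  generalize ‖ε t‖ = N at hN
  have e1 : (-s * (1 / (tc - t) + γ * N / (tc - t) ^ 2) * N * (tc - t) - N * (-1)) / (tc - t) ^ 2
      = N / (tc - t) ^ 2 - s * (N / (tc - t) ^ 2 * (1 + γ * N / (tc - t))) := by
    field_simp
    ring
  have e2 : -(γ * t * (N / (tc - t)) ^ 2 / (tc * (tc - t))) + N / (tc - t) / tc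
      = N / (tc - t) ^ 2 - t / tc * (N / (tc - t) ^ 2 * (1 + γ * N / (tc - t))) := by
    field_simp
    ring
  rw [e1, e2]
  have hK : 0 ≤ N / (tc - t) ^ 2 * (1 + γ * N / (tc - t)) := by positivity
  linarith [mul_le_mul_of_nonneg_right hs hK]
end

section
/- Let n ≥ 1, let 0 < α ≤ 1, γ > 0, t_c > 0, and let ε : ℝ → ℝⁿ be continuous on [0, t_c) and follow the noise-free FOZNN convergence-phase dynamics on (0, t_c). Then for every t ∈ (0, t_c), ‖ε(t)‖ ≤ ‖ε(0)‖ · (t_c − t)/t_c. -/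
/-- For `ε` continuous on `[0, t_c)` following the noise-free FOZNN
convergence-phase dynamics on `(0, t_c)`, for every `t ∈ (0, t_c)` one has
`‖ε(t)‖ ≤ ‖ε(0)‖ · (t_c − t)/t_c`. -/
theorem foznn_noise_free_norm_bound
    (n : ℕ) (hn : 1 ≤ n) (α γ tc : ℝ)
    (hα0 : 0 < α) (hα1 : α ≤ 1) (hγ : 0 < γ) (htc : 0 < tc)
    (ε : ℝ → EuclideanSpace ℝ (Fin n))
    (hcont : ContinuousOn ε (Set.Ico 0 tc))
    (hdyn : ∀ t ∈ Set.Ioo (0 : ℝ) tc, ε t ≠ 0 ∧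
      HasDerivAt ε
        ((-(t ^ (α - 1) / tc ^ (α - 1)) *
          (1 / (tc - t) + γ * ‖ε t‖ / (tc - t) ^ 2)) • ε t) t) :
    ∀ t ∈ Set.Ioo (0 : ℝ) tc, ‖ε t‖ ≤ ‖ε 0‖ * (tc - t) / tc := by
  have key : AntitoneOn (fun t => ‖(tc - t)⁻¹ • ε t‖ ^ 2) (Set.Ico 0 tc) := by
    have hd : ∀ t ∈ Set.Ioo (0 : ℝ) tc, ∃ c : ℝ, c ≤ 0 ∧
        HasDerivAt (fun t => ‖(tc - t)⁻¹ • ε t‖ ^ 2) (2 * (c * ‖(tc - t)⁻¹ • ε t‖ ^ 2)) t := by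
      intro t ht
      obtain ⟨-, h⟩ := hdyn t ht
      have hp : 0 < tc - t := sub_pos.2 ht.2
      have h1 : HasDerivAt (fun t : ℝ => (tc - t)⁻¹) (-(-1) / (tc - t) ^ 2) t :=
        ((hasDerivAt_id t).const_sub tc).fun_inv hp.ne'
      have h2 := (h1.fun_smul h).norm_sq
      have hr : 1 ≤ t ^ (α - 1) / tc ^ (α - 1) := by
        rw [one_le_div (Real.rpow_pos_of_pos htc _)]
        exact Real.rpow_le_rpow_of_nonpos ht.1 ht.2.le (by linarith)
      set r := t ^ (α - 1) / tc ^ (α - 1) with hrdef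
      set q := γ * ‖ε t‖ / (tc - t) ^ 2 with hq
      have hq0 : 0 ≤ q := by positivity
      have hi : 0 < (tc - t)⁻¹ := inv_pos.2 hp
      refine ⟨-r * (1 / (tc - t) + q) + (tc - t)⁻¹, ?_, ?_⟩
      · rw [one_div]
        nlinarith [mul_nonneg (sub_nonneg.2 hr) hi.le,
          mul_nonneg (sub_nonneg.2 hr) hq0]
      · convert h2 using 1
        rw [← real_inner_self_eq_norm_sq]
        simp only [inner_add_right, inner_smul_left, inner_smul_right, conj_trivial]
        field_simp
    apply antitoneOn_of_deriv_nonpos (convex_Ico 0 tc)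
    · have c1 : ContinuousOn (fun t : ℝ => (tc - t)⁻¹) (Set.Ico 0 tc) :=
        ContinuousOn.inv₀ (by fun_prop) (fun x hx => (sub_pos.2 hx.2).ne')
      have c2 : ContinuousOn (fun t : ℝ => (tc - t)⁻¹ • ε t) (Set.Ico 0 tc) := c1.smul hcont
      exact c2.norm.pow 2
    · rw [interior_Ico]
      intro t ht
      obtain ⟨c, -, h⟩ := hd t ht
      exact h.differentiableAt.differentiableWithinAt
    · rw [interior_Ico]
      intro t ht
      obtain ⟨c, hc, h⟩ := hd t ht
      rw [h.deriv]
      nlinarith [mul_nonneg (neg_nonneg.2 hc) (sq_nonneg ‖(tc - t)⁻¹ • ε t‖)]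
  intro t ht
  have hp : 0 < tc - t := sub_pos.2 ht.2
  have h := key ⟨le_rfl, htc⟩ ⟨ht.1.le, ht.2⟩ ht.1.le
  have h' := (sq_le_sq₀ (norm_nonneg _) (norm_nonneg _)).1 h
  rw [norm_smul, norm_smul, sub_zero, Real.norm_of_nonneg (inv_pos.2 hp).le,
    Real.norm_of_nonneg (inv_pos.2 htc).le, inv_mul_le_iff₀ hp] at h'
  calc ‖ε t‖ ≤ _ := h'
    _ = _ := by ring
end

section
/- Let 0 < α ≤ 1 and t > 0, and let f, g : ℝ → ℝ be α-differentiable at t with conformable fractional derivatives L_f and L_g respectively. Then the product f·g is α-differentiable at t with conformable fractional derivative f(t)·L_g + g(t)·L_f. -/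
/-- `f` has conformable fractional derivative `L` of order `α` at `t`:
`(f(t + s·t^{1−α}) − f(t))/s → L` as `s → 0` (punctured limit). -/
def HasConformableDerivAt (α : ℝ) (f : ℝ → ℝ) (L t : ℝ) : Prop :=
  Filter.Tendsto (fun s => (f (t + s * t ^ (1 - α)) - f t) / s)
    (nhdsWithin 0 {(0 : ℝ)}ᶜ) (nhds L)

/-- Leibniz rule for the conformable fractional derivative:
if `f` and `g` are `α`-differentiable at `t > 0` with conformable derivatives `Lf` and `Lg`,
then `f·g` is `α`-differentiable at `t` with conformable derivative `f(t)·Lg + g(t)·Lf`. -/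
theorem conformable_deriv_mul
    (α t : ℝ) (hα0 : 0 < α) (hα1 : α ≤ 1) (ht : 0 < t)
    (f g : ℝ → ℝ) (Lf Lg : ℝ)
    (hf : HasConformableDerivAt α f Lf t)
    (hg : HasConformableDerivAt α g Lg t) :
    HasConformableDerivAt α (fun x => f x * g x) (f t * Lg + g t * Lf) t := by
  unfold HasConformableDerivAt at *
  have hs : Filter.Tendsto (fun s : ℝ => s) (nhdsWithin 0 {(0 : ℝ)}ᶜ) (nhds 0) :=
    Filter.tendsto_id.mono_left nhdsWithin_le_nhds
  have h := ((hg.const_mul (f t)).add (hf.const_mul (g t))).add ((hs.mul hf).mul hg)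
  have e : f t * Lg + g t * Lf + 0 * Lf * Lg = f t * Lg + g t * Lf := by ring
  rw [e] at h
  refine h.congr' ?_
  filter_upwards [self_mem_nhdsWithin] with s hs0
  have hs1 : s ≠ 0 := hs0
  field_simp
  ring
end

section
/- Let 0 < α ≤ 1 and t > 0, and let f : ℝ → ℝ be α-differentiable at t. Then f is continuous at t. -/
/-- If `0 < α ≤ 1`, `t > 0`, and `f` is `α`-differentiable at `t`
(i.e. its conformable fractional derivative of order `α` exists at `t`),
then `f` is continuous at `t`. -/
theorem continuousAt_of_conformable_deriv
    (α t : ℝ) (hα0 : 0 < α) (hα1 : α ≤ 1) (ht : 0 < t)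
    (f : ℝ → ℝ) (L : ℝ) (hf : HasConformableDerivAt α f L t) :
    ContinuousAt f t := by
  have hc : 0 < t ^ (1 - α) := Real.rpow_pos_of_pos ht _
  unfold HasConformableDerivAt at hf
  generalize t ^ (1 - α) = c at hc hf
  have hg : HasDerivAt (fun s => f (t + s * c)) L 0 := by
    rw [hasDerivAt_iff_tendsto_slope_zero]
    refine hf.congr fun s => ?_
    simp [div_eq_inv_mul]
  have h1 : ContinuousAt (fun s => f (t + s * c)) ((t - t) / c) := by
    simpa using hg.continuousAt
  have h2 : ContinuousAt (fun x : ℝ => (x - t) / c) t := by fun_prop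
  have h3 := ContinuousAt.comp (f := fun x : ℝ => (x - t) / c) h1 h2
  have h4 : (fun s => f (t + s * c)) ∘ (fun x : ℝ => (x - t) / c) = f := by
    funext x
    simp [div_mul_cancel₀ _ hc.ne']
  rwa [h4] at h3
end

section
/- Let τ > 0. For all real numbers u and v, the perturbed Fischer–Burmeister function vanishes at (u, v), i.e. u + v − √(u² + v² + τ) = 0, if and only if u > 0, v > 0, and 2·u·v = τ. -/
/-- For `τ > 0`, the perturbed Fischer–Burmeister function
`ψ^τ_FB(u,v) = u + v − √(u² + v² + τ)` vanishes at `(u, v)` if and only if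
`u > 0`, `v > 0` and `2·u·v = τ`. -/
theorem perturbed_fischer_burmeister_zero_iff (τ : ℝ) (hτ : 0 < τ) (u v : ℝ) :
    u + v - Real.sqrt (u ^ 2 + v ^ 2 + τ) = 0 ↔ 0 < u ∧ 0 < v ∧ 2 * u * v = τ := by
  constructor
  · intro h
    have hs : 0 < Real.sqrt (u ^ 2 + v ^ 2 + τ) := Real.sqrt_pos.mpr (by positivity)
    have hq : Real.sqrt (u ^ 2 + v ^ 2 + τ) ^ 2 = u ^ 2 + v ^ 2 + τ :=
      Real.sq_sqrt (by positivity)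
    have he : Real.sqrt (u ^ 2 + v ^ 2 + τ) = u + v := by linarith
    rw [he] at hs hq
    have huv : 2 * u * v = τ := by linarith [hq, add_sq u v]
    have hp : 0 < u * v := by linarith
    rcases mul_pos_iff.mp hp with ⟨hu, hv⟩ | ⟨hu, hv⟩
    · exact ⟨hu, hv, huv⟩
    · linarith
  · rintro ⟨hu, hv, rfl⟩
    have he : u ^ 2 + v ^ 2 + 2 * u * v = (u + v) ^ 2 := by ring
    rw [he, Real.sqrt_sq (by positivity), sub_self]
end
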